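/- arXiv:1607.04728 — 2 statements merged into one kernel-verified Lean document; each statement's English description precedes it below -/
import Mathlib

section
/- For every real α ≥ 0 and every language L ⊆ A*, one has d*_{α+1}(L) ≤ d_α(L) ≤ 2 · d*_{α+1}(L). -/
open scoped ENNReal Pointwise

universe u

variable {A : Type u}

/-- The factor of `x` of length `n` starting at position `i`. -/
def wordSeg (x : ℕ → A) (i n : ℕ) : List A := (List.range n).map fun j => x (i + j)

/-- The set of finite factors of a one-sided infinite word (including the empty word). -/
def Fac (x : ℕ → A) : Set (List A) := {u | ∃ i n, u = wordSeg x i n}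

/-- The factor of a two-sided word `x` of length `n` starting at position `i`. -/
def wordSegZ (x : ℤ → A) (i : ℤ) (n : ℕ) : List A := (List.range n).map fun j => x (i + j)

/-- The set of finite factors of a two-sided infinite word (including the empty word). -/
def FacZ (x : ℤ → A) : Set (List A) := {u | ∃ (i : ℤ) (n : ℕ), u = wordSegZ x i n}

/-- The complexity of a language: the number of words of length `n` in it. -/
noncomputable def complexity (L : Set (List A)) (n : ℕ) : ℕ :=
  {u ∈ L | u.length = n}.ncard

/-- The accumulative complexity `p*_L(n) = Σ_{i=0}^{n} p_L(i)`. -/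
noncomputable def accComplexity (L : Set (List A)) (n : ℕ) : ℕ :=
  ∑ i ∈ Finset.range (n + 1), complexity L i

/-- Concatenation (product) of two languages. -/
def prodL (S T : Set (List A)) : Set (List A) := {w | ∃ s ∈ S, ∃ t ∈ T, w = s ++ t}

/-- `powL S k` = `S^k`, the set of concatenations of `k` elements of `S`. -/
def powL (S : Set (List A)) : ℕ → Set (List A)
  | 0 => {([] : List A)}
  | k + 1 => prodL (powL S k) S

/-- `f(n) = O(n^α)`. -/
def PolyBound (f : ℕ → ℕ) (α : ℝ) : Prop :=
  ∃ C : ℝ, ∀ n : ℕ, 1 ≤ n → (f n : ℝ) ≤ C * (n : ℝ) ^ α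

/-- The `α`-dimension `d_α(L)`: infimum of the integers `k ≥ 1` such that `L ⊆ S^k`
for some language `S` with `p_S(n) = O(n^α)`, with `inf ∅ = ⊤`. -/
noncomputable def polyDim (α : ℝ) (L : Set (List A)) : ℕ∞ :=
  sInf {k : ℕ∞ | ∃ m : ℕ, k = m ∧ 1 ≤ m ∧
    ∃ S : Set (List A), PolyBound (complexity S) α ∧ L ⊆ powL S m}

/-- The accumulative `α`-dimension `d*_α(L)`. -/
noncomputable def polyDimStar (α : ℝ) (L : Set (List A)) : ℕ∞ :=
  sInf {k : ℕ∞ | ∃ m : ℕ, k = m ∧ 1 ≤ m ∧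
    ∃ S : Set (List A), PolyBound (accComplexity S) α ∧ L ⊆ powL S m}

/-- The cost `c(L)`: infimum of the `α ≥ 0` with `d_α(L) < +∞`, with `inf ∅ = ⊤`. -/
noncomputable def cost (L : Set (List A)) : ℝ≥0∞ :=
  sInf {a : ℝ≥0∞ | ∃ α : ℝ, 0 ≤ α ∧ a = ENNReal.ofReal α ∧ polyDim α L ≠ ⊤}

/-- A one-sided word is ultimately periodic if it is of the form `u v v v ⋯`. -/
def UltimatelyPeriodic (x : ℕ → A) : Prop :=
  ∃ N p : ℕ, 0 < p ∧ ∀ n : ℕ, N ≤ n → x (n + p) = x n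

/-- A two-sided word is eventually periodic if it is periodic far enough to the right
and far enough to the left. -/
def EventuallyPeriodicZ (x : ℤ → A) : Prop :=
  (∃ p : ℕ, 0 < p ∧ ∃ N : ℤ, ∀ n : ℤ, N ≤ n → x (n + p) = x n) ∧
  (∃ p : ℕ, 0 < p ∧ ∃ N : ℤ, ∀ n : ℤ, n ≤ N → x (n - p) = x n)

/-- A one-sided word is recurrent if each of its factors occurs infinitely often. -/
def Recurrent (x : ℕ → A) : Prop :=
  ∀ u ∈ Fac x, ∀ N : ℕ, ∃ i : ℕ, N ≤ i ∧ u = wordSeg x i u.length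

/-- `u` is a right special factor for the language `F`. -/
def RightSpecial (F : Set (List A)) (u : List A) : Prop :=
  u ∈ F ∧ ∃ a b : A, a ≠ b ∧ u ++ [a] ∈ F ∧ u ++ [b] ∈ F

/-- `M` is a `D`-marker set for a word with factor set `F`: every factor of length
at least `D n` contains a factor of length `n` belonging to `M`. -/
def MarkerSet (D : ℕ) (M F : Set (List A)) : Prop :=
  ∀ n : ℕ, 1 ≤ n → ∀ u ∈ F, D * n ≤ u.length →
    ∃ v ∈ M, v.length = n ∧ v <:+: u

/-- A language is factorial if it contains all factors of its members. -/
def IsFactorial (S : Set (List A)) : Prop := ∀ u ∈ S, ∀ v : List A, v <:+: u → v ∈ S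

/-- The bound `Σ_{k ∈ I_n ∩ ℕ} p_M(2^k)(1 + 4 p(3n)/2^k)` where
`I_n = (log₂(n/(2D)), log₂(2n)]`, i.e. the sum is over natural `k` with
`n/(2D) < 2^k ≤ 2n`. -/
noncomputable def markerBound (M F : Set (List A)) (D n : ℕ) : ℝ :=
  ∑ k ∈ (Finset.range (2 * n + 2)).filter (fun k => n < 2 * D * 2 ^ k ∧ 2 ^ k ≤ 2 * n),
    (complexity M (2 ^ k) : ℝ) * (1 + 4 * (complexity F (3 * n) : ℝ) / 2 ^ k)

-- The word `u = ∏_{i=1}^{∞} a b^i = a b a b b a b b b ⋯` over `{a,b}`, with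
-- `a = false`, `b = true`: position `n` carries an `a` iff `n = (i-1)(i+2)/2` for some
-- `i ≥ 1`, i.e. iff `2n = m(m+3)` for some `m ≥ 0`.
open Classical in
noncomputable def uWord (n : ℕ) : Bool :=
  if ∃ m : ℕ, 2 * n = m * (m + 3) then false else true

/-!
If `p_S(n) = O(n^α)`, then summation gives `p*_S(n) = O(n^(α+1))`, hence the first inequality.

For the second, it suffices to cut every word of `S` in two so that the pieces form a language `T`
of low complexity, since then `S ⊆ T²`. List the `N` words of `S` with length in `[4h, 8h)` by
nonincreasing length, and cut the `i`-th one after `h + (i mod h)` letters. As `i` runs through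
`qh, qh + 1, …, qh + h - 1`, the length of the left piece strictly increases, so that of the right
piece strictly decreases: each of these at most `N / h + 1` blocks of indices yields at most one
left and one right piece of any given length. If `N = O(h^(α+1))`, this leaves `O(h^α)` pieces of
each length. All pieces have length in `[h, 8h)`, so only three of the scales `h = 2^j` contribute
to a given length.
-/

section PolyBound

open Finset

variable {f g : ℕ → ℕ} {α : ℝ}

lemma PolyBound.exists_nonneg (hf : PolyBound f α) :
    ∃ C : ℝ, 0 ≤ C ∧ ∀ n : ℕ, 1 ≤ n → (f n : ℝ) ≤ C * (n : ℝ) ^ α := by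
  obtain ⟨C, hC⟩ := hf
  have h1 : (f 1 : ℝ) ≤ C := by simpa using hC 1 le_rfl
  exact ⟨C, (Nat.cast_nonneg _).trans h1, hC⟩

lemma PolyBound.mono (hg : PolyBound g α) (hfg : ∀ n, 1 ≤ n → f n ≤ g n) : PolyBound f α := by
  obtain ⟨C, hC⟩ := hg
  exact ⟨C, fun n hn ↦ (Nat.cast_le.2 (hfg n hn)).trans (hC n hn)⟩

lemma PolyBound.add (hf : PolyBound f α) (hg : PolyBound g α) :
    PolyBound (fun n ↦ f n + g n) α := by
  obtain ⟨C, hC⟩ := hf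
  obtain ⟨D, hD⟩ := hg
  refine ⟨C + D, fun n hn ↦ ?_⟩
  rw [Nat.cast_add, add_mul]
  exact add_le_add (hC n hn) (hD n hn)

lemma PolyBound.const_mul (c : ℕ) (hf : PolyBound f α) : PolyBound (fun n ↦ c * f n) α := by
  obtain ⟨C, hC⟩ := hf
  refine ⟨c * C, fun n hn ↦ ?_⟩
  rw [Nat.cast_mul, mul_assoc]
  exact mul_le_mul_of_nonneg_left (hC n hn) c.cast_nonneg

lemma polyBound_const (hα : 0 ≤ α) (c : ℕ) : PolyBound (fun _ ↦ c) α :=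
  ⟨c, fun _ hn ↦ le_mul_of_one_le_right c.cast_nonneg
    (Real.one_le_rpow (Nat.one_le_cast.2 hn) hα)⟩

lemma PolyBound.sum_range_succ (hf : PolyBound f α) (hα : 0 ≤ α) :
    PolyBound (fun n ↦ ∑ i ∈ range (n + 1), f i) (α + 1) := by
  obtain ⟨C, hC0, hC⟩ := hf.exists_nonneg
  have hpos : PolyBound (fun n ↦ ∑ i ∈ range n, f (i + 1)) (α + 1) := by
    refine ⟨C, fun n hn ↦ ?_⟩
    have hn0 : (n : ℝ) ≠ 0 := Nat.cast_ne_zero.2 (by lia)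
    calc ((∑ i ∈ range n, f (i + 1) : ℕ) : ℝ)
        = ∑ i ∈ range n, (f (i + 1) : ℝ) := Nat.cast_sum _ _
      _ ≤ ∑ _i ∈ range n, C * (n : ℝ) ^ α := by
          refine sum_le_sum fun i hi ↦ (hC (i + 1) (by lia)).trans ?_
          have hin : i + 1 ≤ n := mem_range.1 hi
          gcongr
      _ = C * (n : ℝ) ^ (α + 1) := by
          rw [sum_const, card_range, nsmul_eq_mul, Real.rpow_add_one hn0]
          ring
  refine (hpos.add (polyBound_const (by linarith) (f 0))).mono fun n _ ↦ ?_
  rw [Finset.sum_range_succ']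

lemma PolyBound.comp_mul_div (hf : PolyBound f (α + 1)) {d : ℕ} (hd : 0 < d) :
    PolyBound (fun n ↦ f (d * n) / n) α := by
  obtain ⟨C, hC⟩ := hf
  refine ⟨C * (d : ℝ) ^ (α + 1), fun n hn ↦ ?_⟩
  have hn0 : (0 : ℝ) < n := Nat.cast_pos.2 hn
  calc ((f (d * n) / n : ℕ) : ℝ) ≤ (f (d * n) : ℝ) / n := Nat.cast_div_le
    _ ≤ C * ((d * n : ℕ) : ℝ) ^ (α + 1) / n := by
        gcongr
        exact hC _ (Nat.mul_pos hd hn)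
    _ = C * (d : ℝ) ^ (α + 1) * (n : ℝ) ^ α := by
        rw [Nat.cast_mul, Real.mul_rpow d.cast_nonneg n.cast_nonneg, Real.rpow_add_one hn0.ne']
        field_simp

end PolyBound

section Complexity

open Finset

lemma complexity_union_le (S T : Set (List A)) (n : ℕ) :
    complexity (S ∪ T) n ≤ complexity S n + complexity T n := by
  have hslice : {u ∈ S ∪ T | u.length = n} = {u ∈ S | u.length = n} ∪ {u ∈ T | u.length = n} :=
    Set.union_inter_distrib_right S T {u | u.length = n}
  rw [complexity, hslice]
  exact Set.ncard_union_le _ _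

lemma complexity_iUnion_le {ι : Type*} (T : ι → Set (List A)) {n : ℕ} {J : Finset ι}
    (hJ : ∀ i, ∀ t ∈ T i, t.length = n → i ∈ J) :
    complexity (⋃ i, T i) n ≤ ∑ i ∈ J, complexity (T i) n := by
  have hslice : {u ∈ ⋃ i, T i | u.length = n} = ⋃ i ∈ J, {u ∈ T i | u.length = n} := by
    ext u
    simp only [Set.mem_ofPred_eq, Set.mem_iUnion, exists_prop]
    constructor
    · rintro ⟨⟨i, hi⟩, hu⟩
      exact ⟨i, hJ i u hi hu, hi, hu⟩
    · rintro ⟨i, -, hi, hu⟩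
      exact ⟨⟨i, hi⟩, hu⟩
  rw [complexity, hslice]
  exact J.set_ncard_biUnion_le _

lemma complexity_range_le {ι : Type*} [Fintype ι] (u : ι → List A) (n : ℕ) :
    complexity (Set.range u) n ≤ #{i | (u i).length = n} := by
  classical
  have hslice : {w ∈ Set.range u | w.length = n} = ({i | (u i).length = n} : Finset ι).image u := by
    ext w
    simp only [Set.mem_ofPred_eq, Set.mem_range, coe_image, coe_filter, mem_univ, true_and,
      Set.mem_image]
    constructor
    · rintro ⟨⟨i, rfl⟩, hi⟩
      exact ⟨i, hi, rfl⟩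
    · rintro ⟨i, hi, rfl⟩
      exact ⟨⟨i, rfl⟩, hi⟩
  rw [complexity, hslice, Set.ncard_coe_finset]
  exact card_image_le

lemma ncard_length_lt_le_accComplexity [Finite A] (S : Set (List A)) (n : ℕ) :
    {w ∈ S | w.length < n}.ncard ≤ accComplexity S n := by
  have hsub : {w ∈ S | w.length < n} ⊆ ⋃ i ∈ range (n + 1), {w ∈ S | w.length = i} := by
    rintro w ⟨hw, hlen⟩
    exact Set.mem_biUnion (mem_range.2 (by lia)) ⟨hw, rfl⟩
  have hfin : (⋃ i ∈ range (n + 1), {w ∈ S | w.length = i}).Finite :=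
    (range (n + 1)).finite_toSet.biUnion fun i _ ↦
      (List.finite_length_eq A i).subset fun _ hw ↦ hw.2
  exact (Set.ncard_le_ncard hsub hfin).trans (set_ncard_biUnion_le _ _)

variable {α : ℝ}

lemma polyBound_complexity_of_finite (hα : 0 ≤ α) {S : Set (List A)} (hS : S.Finite) :
    PolyBound (complexity S) α :=
  (polyBound_const hα S.ncard).mono fun _ _ ↦ Set.ncard_le_ncard (Set.sep_subset _ _) hS

lemma PolyBound.complexity_union {S T : Set (List A)} (hS : PolyBound (complexity S) α)
    (hT : PolyBound (complexity T) α) : PolyBound (complexity (S ∪ T)) α :=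
  (hS.add hT).mono fun n _ ↦ complexity_union_le S T n

lemma PolyBound.complexity_iUnion_dyadic {g : ℕ → ℕ} (hg : PolyBound g α) (hα : 0 ≤ α)
    {d : ℕ} {T : ℕ → Set (List A)}
    (hlen : ∀ j, ∀ t ∈ T j, t.length ∈ Set.Ico (2 ^ j) (2 ^ (j + d)))
    (hT : ∀ j n, complexity (T j) n ≤ g (2 ^ j)) :
    PolyBound (complexity (⋃ j, T j)) α := by
  obtain ⟨C, hC0, hC⟩ := hg.exists_nonneg
  refine ⟨d * C, fun n hn ↦ ?_⟩
  set J := Ico (Nat.log 2 n + 1 - d) (Nat.log 2 n + 1)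
  have hJ : ∀ j, ∀ t ∈ T j, t.length = n → j ∈ J := by
    rintro j t ht rfl
    have hj : j ≤ Nat.log 2 t.length := Nat.le_log_of_pow_le one_lt_two (hlen j t ht).1
    have hjd : Nat.log 2 t.length < j + d := Nat.log_lt_of_lt_pow (by lia) (hlen j t ht).2
    exact mem_Ico.2 ⟨by lia, by lia⟩
  have hscale : ∀ j ∈ J, (complexity (T j) n : ℝ) ≤ C * (n : ℝ) ^ α := by
    intro j hj
    have hjn : 2 ^ j ≤ n :=
      Nat.pow_le_of_le_log (by lia) (Nat.lt_succ_iff.1 (mem_Ico.1 hj).2)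
    calc (complexity (T j) n : ℝ) ≤ (g (2 ^ j) : ℝ) := Nat.cast_le.2 (hT j n)
      _ ≤ C * ((2 ^ j : ℕ) : ℝ) ^ α := hC _ Nat.one_le_two_pow
      _ ≤ C * (n : ℝ) ^ α := by gcongr
  have hcard : #J ≤ d := by
    rw [Nat.card_Ico]
    lia
  calc (complexity (⋃ j, T j) n : ℝ)
      ≤ ∑ j ∈ J, (complexity (T j) n : ℝ) := mod_cast complexity_iUnion_le T hJ
    _ ≤ #J • (C * (n : ℝ) ^ α) := sum_le_card_nsmul _ _ _ hscale
    _ ≤ d * C * (n : ℝ) ^ α := by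
        rw [nsmul_eq_mul, ← mul_assoc]
        gcongr

end Complexity

section Cutting

open Finset

lemma exists_antitone_enumeration {ι β : Type*} [LinearOrder β] (f : ι → β) {s : Set ι}
    (hs : s.Finite) : ∃ u : Fin s.ncard → ι, Set.range u = s ∧ Antitone (f ∘ u) := by
  have := hs.to_subtype
  let e : Fin s.ncard ≃ s := (Finite.equivFin s).symm
  let f' : Fin s.ncard → βᵒᵈ := fun i ↦ OrderDual.toDual (f (e i))
  refine ⟨fun i ↦ e (Tuple.sort f' i), ?_, fun i j hij ↦ Tuple.monotone_sort f' hij⟩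
  have hrange : Set.range (Subtype.val ∘ (Tuple.sort f').trans e) = Set.range Subtype.val :=
    ((Tuple.sort f').trans e).surjective.range_comp Subtype.val
  exact hrange.trans Subtype.range_coe

/-- The number of letters in the left piece of the `i`-th word of a list whose words are cut at
scale `h`. -/
def cutPos (h i : ℕ) : ℕ := h + i % h

/-- The left and right pieces obtained by cutting the word `u i` after `cutPos h i` letters, for
every index `i`. -/
def cutPieces (h : ℕ) {N : ℕ} (u : Fin N → List A) : Set (List A) :=
  Set.range (fun i ↦ (u i).take (cutPos h i)) ∪ Set.range fun i ↦ (u i).drop (cutPos h i)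

variable {h N : ℕ} {u : Fin N → List A}

lemma cutPos_lt_two_mul (hh : 0 < h) (i : ℕ) : cutPos h i < 2 * h := by
  have := Nat.mod_lt i hh
  rw [cutPos]
  lia

lemma eq_of_div_eq_of_cutPos_eq {i j : ℕ} (hdiv : i / h = j / h)
    (hcut : cutPos h i = cutPos h j) : i = j :=
  Nat.ext_div_mod hdiv (Nat.add_left_cancel hcut)

lemma cutPos_le_cutPos_of_div_eq {i j : ℕ} (hij : i ≤ j) (hdiv : i / h = j / h) :
    cutPos h i ≤ cutPos h j := by
  refine Nat.add_le_add_left (Nat.le_of_add_le_add_left (a := h * (i / h)) ?_) h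
  rwa [Nat.div_add_mod, hdiv, Nat.div_add_mod]

lemma range_subset_prodL_cutPieces (h : ℕ) (u : Fin N → List A) :
    Set.range u ⊆ prodL (cutPieces h u) (cutPieces h u) := by
  rintro _ ⟨i, rfl⟩
  exact ⟨_, .inl ⟨i, rfl⟩, _, .inr ⟨i, rfl⟩, (List.take_append_drop _ _).symm⟩

lemma length_mem_Ico_of_mem_cutPieces (hh : 0 < h)
    (hu : ∀ i, (u i).length ∈ Set.Ico (4 * h) (8 * h)) {t : List A} (ht : t ∈ cutPieces h u) :
    t.length ∈ Set.Ico h (8 * h) := by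
  obtain ⟨i, rfl⟩ | ⟨i, rfl⟩ := ht
  all_goals
    have hi := hu i
    have hlt := cutPos_lt_two_mul hh i
    have hle : h ≤ cutPos h i := Nat.le_add_right _ _
    simp only [List.length_take, List.length_drop, Set.mem_Ico] at hi ⊢
    lia

lemma card_le_div_add_one_of_injOn_div {s : Finset (Fin N)}
    (hs : Set.InjOn (fun i : Fin N ↦ (i : ℕ) / h) s) : #s ≤ N / h + 1 := by
  rw [← card_range (N / h + 1)]
  refine card_le_card_of_injOn _ (fun i _ ↦ ?_) hs
  exact mem_coe.2 (mem_range.2 (Nat.lt_succ_of_le (Nat.div_le_div_right i.is_lt.le)))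

lemma card_cutPos_eq_le (h N n : ℕ) : #{i : Fin N | cutPos h i = n} ≤ N / h + 1 := by
  refine card_le_div_add_one_of_injOn_div fun i hi j hj hdiv ↦ ?_
  have hij : cutPos h i = cutPos h j := (mem_filter.1 hi).2.trans (mem_filter.1 hj).2.symm
  exact Fin.ext (eq_of_div_eq_of_cutPos_eq hdiv hij)

lemma card_length_sub_cutPos_eq_le (hh : 0 < h) (hanti : Antitone (List.length ∘ u))
    (hu : ∀ i, 2 * h ≤ (u i).length) (n : ℕ) :
    #{i | (u i).length - cutPos h i = n} ≤ N / h + 1 := by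
  refine card_le_div_add_one_of_injOn_div fun i hi j hj hdiv ↦ ?_
  have hij : (u i).length - cutPos h i = (u j).length - cutPos h j :=
    (mem_filter.1 hi).2.trans (mem_filter.1 hj).2.symm
  clear hi hj
  wlog hle : i ≤ j generalizing i j
  · exact (this j i hdiv.symm hij.symm (le_of_not_ge hle)).symm
  have hlen : (u j).length ≤ (u i).length := hanti hle
  have hcut : cutPos h i ≤ cutPos h j := cutPos_le_cutPos_of_div_eq hle hdiv
  have hlt := cutPos_lt_two_mul hh j
  have hj := hu j
  exact Fin.ext (eq_of_div_eq_of_cutPos_eq hdiv (by lia))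

lemma complexity_cutPieces_le (hh : 0 < h) (hanti : Antitone (List.length ∘ u))
    (hu : ∀ i, 2 * h ≤ (u i).length) (n : ℕ) :
    complexity (cutPieces h u) n ≤ 2 * (N / h + 1) := by
  have htake (i : Fin N) : ((u i).take (cutPos h i)).length = cutPos h i :=
    List.length_take_of_le ((cutPos_lt_two_mul hh i).le.trans (hu i))
  have hleft := complexity_range_le (fun i ↦ (u i).take (cutPos h i)) n
  have hright := complexity_range_le (fun i ↦ (u i).drop (cutPos h i)) n
  simp only [htake] at hleft
  simp only [List.length_drop] at hright
  calc complexity (cutPieces h u) n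
      ≤ _ := complexity_union_le _ _ n
    _ ≤ (N / h + 1) + (N / h + 1) :=
        add_le_add (hleft.trans (card_cutPos_eq_le h N n))
          (hright.trans (card_length_sub_cutPos_eq_le hh hanti hu n))
    _ = 2 * (N / h + 1) := (two_mul _).symm

end Cutting

section Dimension

lemma prodL_mono {S S' T T' : Set (List A)} (hS : S ⊆ S') (hT : T ⊆ T') :
    prodL S T ⊆ prodL S' T' := by
  rintro _ ⟨s, hs, t, ht, rfl⟩
  exact ⟨s, hS hs, t, hT ht, rfl⟩

lemma powL_subset_powL_two_mul {S T : Set (List A)} (hST : S ⊆ prodL T T) (m : ℕ) :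
    powL S m ⊆ powL T (2 * m) := by
  induction m with
  | zero => exact subset_rfl
  | succ m ih =>
    rintro _ ⟨s, hs, t, ht, rfl⟩
    obtain ⟨x, hx, y, hy, rfl⟩ := hST ht
    exact ⟨s ++ x, ⟨s, ih hs, x, hx, rfl⟩, y, hy, (List.append_assoc s x y).symm⟩

lemma exists_subset_prodL_complexity_le [Finite A] (S : Set (List A)) {h : ℕ} (hh : 0 < h) :
    ∃ T : Set (List A), {w ∈ S | w.length ∈ Set.Ico (4 * h) (8 * h)} ⊆ prodL T T ∧
      (∀ t ∈ T, t.length ∈ Set.Ico h (8 * h)) ∧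
      ∀ n, complexity T n ≤ 2 * (accComplexity S (8 * h) / h + 1) := by
  set F := {w ∈ S | w.length ∈ Set.Ico (4 * h) (8 * h)}
  have hshort : {w ∈ S | w.length < 8 * h}.Finite :=
    (List.finite_length_lt A (8 * h)).subset fun _ hw ↦ hw.2
  have hsub : F ⊆ {w ∈ S | w.length < 8 * h} := fun _ hw ↦ ⟨hw.1, hw.2.2⟩
  have hN : F.ncard ≤ accComplexity S (8 * h) :=
    (Set.ncard_le_ncard hsub hshort).trans (ncard_length_lt_le_accComplexity S _)
  obtain ⟨u, hrange, hanti⟩ := exists_antitone_enumeration List.length (hshort.subset hsub)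
  have hu (i) : (u i).length ∈ Set.Ico (4 * h) (8 * h) :=
    (hrange.subset (Set.mem_range_self i)).2
  refine ⟨cutPieces h u, hrange.superset.trans (range_subset_prodL_cutPieces h u),
    fun t ↦ length_mem_Ico_of_mem_cutPieces hh hu, fun n ↦ ?_⟩
  calc complexity (cutPieces h u) n ≤ 2 * (F.ncard / h + 1) :=
        complexity_cutPieces_le hh hanti (fun i ↦ by have := (hu i).1; lia) n
    _ ≤ 2 * (accComplexity S (8 * h) / h + 1) := by gcongr

lemma exists_mem_Ico_mul_two_pow {n : ℕ} (hn : 4 ≤ n) :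
    ∃ j, n ∈ Set.Ico (4 * 2 ^ j) (8 * 2 ^ j) := by
  obtain ⟨j, hj⟩ := Nat.exists_eq_add_of_le (Nat.le_log_of_pow_le one_lt_two (x := 2) hn)
  have hle : 2 ^ Nat.log 2 n ≤ n := Nat.pow_log_le_self 2 (by lia)
  have hlt : n < 2 ^ (Nat.log 2 n + 1) := Nat.lt_pow_succ_log_self one_lt_two _
  rw [hj] at hle hlt
  exact ⟨j, by rw [pow_add] at hle; lia, by rw [pow_succ, pow_add] at hlt; lia⟩

variable {α : ℝ}

lemma exists_polyBound_complexity_subset_prodL [Finite A] (hα : 0 ≤ α) {S : Set (List A)}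
    (hS : PolyBound (accComplexity S) (α + 1)) :
    ∃ T : Set (List A), PolyBound (complexity T) α ∧ S ⊆ prodL T T := by
  choose T hprod hlen hcomp using fun j : ℕ ↦
    exists_subset_prodL_complexity_le S (h := 2 ^ j) Nat.one_le_two_pow
  have hlen' (j) : ∀ t ∈ T j, t.length ∈ Set.Ico (2 ^ j) (2 ^ (j + 3)) := fun t ht ↦ by
    rw [pow_add, mul_comm]
    exact hlen j t ht
  have hbound : PolyBound (fun h ↦ 2 * (accComplexity S (8 * h) / h + 1)) α :=
    ((hS.comp_mul_div (by decide)).add (polyBound_const hα 1)).const_mul 2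
  let U : Set (List A) := {w | w.length < 4}
  have hU : PolyBound (complexity U) α :=
    polyBound_complexity_of_finite hα (List.finite_length_lt A 4)
  refine ⟨U ∪ ⋃ j, T j, hU.complexity_union (hbound.complexity_iUnion_dyadic hα hlen' hcomp),
    fun w hw ↦ ?_⟩
  obtain hshort | hlong := lt_or_ge w.length 4
  · exact ⟨[], .inl (Nat.zero_lt_succ 3), w, .inl hshort, rfl⟩
  · obtain ⟨j, hj⟩ := exists_mem_Ico_mul_two_pow hlong
    have hT : T j ⊆ U ∪ ⋃ j, T j := (Set.subset_iUnion T j).trans Set.subset_union_right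
    exact prodL_mono hT hT (hprod j ⟨hw, hj⟩)

lemma polyDimStar_add_one_le_polyDim (hα : 0 ≤ α) (L : Set (List A)) :
    polyDimStar (α + 1) L ≤ polyDim α L := by
  refine sInf_le_sInf ?_
  rintro _ ⟨m, rfl, hm, S, hS, hL⟩
  exact ⟨m, rfl, hm, S, hS.sum_range_succ hα, hL⟩

lemma polyDim_le_two_mul_polyDimStar_add_one [Finite A] (hα : 0 ≤ α) (L : Set (List A)) :
    polyDim α L ≤ 2 * polyDimStar (α + 1) L := by
  simp only [polyDimStar, sInf_eq_iInf, ENat.mul_iInf_of_ne two_ne_zero]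
  refine le_iInf₂ ?_
  rintro _ ⟨m, rfl, hm, S, hS, hL⟩
  obtain ⟨T, hT, hST⟩ := exists_polyBound_complexity_subset_prodL hα hS
  exact sInf_le ⟨2 * m, by push_cast; rfl, by lia, T, hT, hL.trans (powL_subset_powL_two_mul hST m)⟩

end Dimension

/-- `d*_{α+1}(L) ≤ d_α(L) ≤ 2 d*_{α+1}(L)`. -/
theorem stmt4 (A : Type u) [Fintype A] [Nonempty A] (α : ℝ) (hα : 0 ≤ α)
    (L : Set (List A)) :
    polyDimStar (α + 1) L ≤ polyDim α L ∧ polyDim α L ≤ 2 * polyDimStar (α + 1) L :=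
  ⟨polyDimStar_add_one_le_polyDim hα L, polyDim_le_two_mul_polyDimStar_add_one hα L⟩
end

section
/- For every language L ⊆ A*, the cost c(L) is finite if and only if p_L(n) = O(n^α) for some real α ≥ 0, i.e., a language has finite cost if and only if its complexity is bounded above by a polynomial. -/
open scoped ENNReal Pointwise

universe u

variable {A : Type u}

/-! A word of length `n` in `S ^ k` is obtained by choosing `k - 1` cutting positions and then the
`k` factors in `S`. Hence `p_S(n) = O(n ^ α)` forces `p_{S ^ k}(n) = O(n ^ (k α + k - 1))`, and any
`L ⊆ S ^ k` inherits this polynomial bound. Conversely, `L ⊆ L ^ 1`, so a language of polynomial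
complexity is already of dimension at most `1` for the corresponding exponent. -/

section PolyBound

open Finset.HasAntidiagonal

variable {f g : ℕ → ℕ} {α β : ℝ}

theorem PolyBound.of_le (hg : PolyBound g α) (hfg : ∀ n, f n ≤ g n) : PolyBound f α := by
  obtain ⟨C, hC⟩ := hg
  exact ⟨C, fun n hn => (Nat.cast_le.2 (hfg n)).trans (hC n hn)⟩

-- `PolyBound` says nothing about `f 0`, so the constant has to absorb that value as well.
theorem PolyBound.exists_forall_le (hf : PolyBound f α) (hα : 0 ≤ α) :
    ∃ C : ℝ, 0 ≤ C ∧ ∀ n : ℕ, 1 ≤ n → ∀ m ≤ n, (f m : ℝ) ≤ C * (n : ℝ) ^ α := by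
  obtain ⟨C, hC⟩ := hf
  have hM : 0 ≤ max C (f 0) := le_max_of_le_right (Nat.cast_nonneg _)
  refine ⟨max C (f 0), hM, fun n hn m hmn => ?_⟩
  obtain rfl | hm := Nat.eq_zero_or_pos m
  · have hn_rpow : 1 ≤ (n : ℝ) ^ α := Real.one_le_rpow (Nat.one_le_cast.2 hn) hα
    exact (le_max_right C (f 0)).trans (le_mul_of_one_le_right hM hn_rpow)
  · calc (f m : ℝ) ≤ C * (m : ℝ) ^ α := hC m hm
      _ ≤ max C (f 0) * (n : ℝ) ^ α := by gcongr; exact le_max_left _ _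

theorem PolyBound.sum_antidiagonal_mul (hf : PolyBound f α) (hg : PolyBound g β)
    (hα : 0 ≤ α) (hβ : 0 ≤ β) :
    PolyBound (fun n => ∑ p ∈ antidiagonal n, f p.1 * g p.2) (α + β + 1) := by
  obtain ⟨C, hC₀, hC⟩ := hf.exists_forall_le hα
  obtain ⟨D, hD₀, hD⟩ := hg.exists_forall_le hβ
  refine ⟨2 * C * D, fun n hn => ?_⟩
  have hn₁ : (1 : ℝ) ≤ n := Nat.one_le_cast.2 hn
  have hn₀ : (0 : ℝ) < n := one_pos.trans_le hn₁
  calc ((∑ p ∈ antidiagonal n, f p.1 * g p.2 : ℕ) : ℝ)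
      = ∑ p ∈ antidiagonal n, (f p.1 : ℝ) * g p.2 := by push_cast; rfl
    _ ≤ ∑ _p ∈ antidiagonal n, C * (n : ℝ) ^ α * (D * (n : ℝ) ^ β) := by
      gcongr with p hp
      · exact hC n hn _ (antidiagonal.fst_le hp)
      · exact hD n hn _ (antidiagonal.snd_le hp)
    _ = (n + 1) * (C * (n : ℝ) ^ α * (D * (n : ℝ) ^ β)) := by simp
    _ ≤ (2 * n) * (C * (n : ℝ) ^ α * (D * (n : ℝ) ^ β)) := by gcongr; linarith
    _ = 2 * C * D * (n : ℝ) ^ (α + β + 1) := by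
      rw [Real.rpow_add_one hn₀.ne', Real.rpow_add hn₀]
      ring

end PolyBound

theorem powL_one (S : Set (List A)) : powL S 1 = S := by
  simp [powL, prodL]

section Complexity

open Finset.HasAntidiagonal

variable [Finite A] {S T : Set (List A)} {α β : ℝ}

theorem finite_mem_length_eq (S : Set (List A)) (n : ℕ) : {u ∈ S | u.length = n}.Finite :=
  (List.finite_length_eq A n).subset fun _ hu => hu.2

theorem complexity_mono (hST : S ⊆ T) (n : ℕ) : complexity S n ≤ complexity T n :=
  Set.ncard_le_ncard (fun _ hu => ⟨hST hu.1, hu.2⟩) (finite_mem_length_eq T n)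

theorem complexity_prodL_le (S T : Set (List A)) (n : ℕ) :
    complexity (prodL S T) n ≤
      ∑ p ∈ antidiagonal n, complexity S p.1 * complexity T p.2 := by
  let pairs (p : ℕ × ℕ) : Set (List A × List A) :=
    {u ∈ S | u.length = p.1} ×ˢ {u ∈ T | u.length = p.2}
  let concat (q : List A × List A) : List A := q.1 ++ q.2
  have pairs_finite (p : ℕ × ℕ) : (pairs p).Finite :=
    (finite_mem_length_eq S p.1).prod (finite_mem_length_eq T p.2)
  have subset_iUnion : {u ∈ prodL S T | u.length = n} ⊆
      ⋃ p ∈ antidiagonal n, concat '' pairs p := by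
    rintro _ ⟨⟨s, hs, t, ht, rfl⟩, hlen⟩
    have hmem : (s.length, t.length) ∈ antidiagonal n :=
      mem_antidiagonal.2 (List.length_append.symm.trans hlen)
    exact Set.mem_biUnion (Finset.mem_coe.2 hmem) ⟨(s, t), ⟨⟨hs, rfl⟩, ht, rfl⟩, rfl⟩
  calc complexity (prodL S T) n
      ≤ (⋃ p ∈ antidiagonal n, concat '' pairs p).ncard :=
        Set.ncard_le_ncard subset_iUnion
          ((Finset.finite_toSet _).biUnion fun p _ => (pairs_finite p).image _)
    _ ≤ ∑ p ∈ antidiagonal n, (concat '' pairs p).ncard :=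
        Finset.set_ncard_biUnion_le _ _
    _ ≤ ∑ p ∈ antidiagonal n, (pairs p).ncard :=
        Finset.sum_le_sum fun p _ => Set.ncard_image_le (pairs_finite p)
    _ = ∑ p ∈ antidiagonal n, complexity S p.1 * complexity T p.2 :=
        Finset.sum_congr rfl fun _ _ => Set.ncard_prod

theorem PolyBound.complexity_prodL (hS : PolyBound (complexity S) α)
    (hT : PolyBound (complexity T) β) (hα : 0 ≤ α) (hβ : 0 ≤ β) :
    PolyBound (complexity (prodL S T)) (α + β + 1) :=
  (hS.sum_antidiagonal_mul hT hα hβ).of_le (complexity_prodL_le S T)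

theorem PolyBound.complexity_powL_succ (hS : PolyBound (complexity S) α) (hα : 0 ≤ α) (k : ℕ) :
    PolyBound (complexity (powL S (k + 1))) ((k + 1) * α + k) := by
  induction k with
  | zero => simpa [powL_one] using hS
  | succ k ih =>
    have hexp : ((k + 1 : ℕ) + 1) * α + (k + 1 : ℕ) = ((k + 1) * α + k) + α + 1 := by
      push_cast
      ring
    rw [hexp]
    exact ih.complexity_prodL hS (by positivity) hα

end Complexity

theorem polyDim_ne_top_iff {α : ℝ} {L : Set (List A)} :
    polyDim α L ≠ ⊤ ↔
      ∃ k : ℕ, 1 ≤ k ∧ ∃ S : Set (List A), PolyBound (complexity S) α ∧ L ⊆ powL S k := by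
  simp [polyDim, sInf_eq_top]

theorem cost_ne_top_iff {L : Set (List A)} :
    cost L ≠ ⊤ ↔ ∃ α : ℝ, 0 ≤ α ∧ polyDim α L ≠ ⊤ := by
  simp [cost, sInf_eq_top]

/-- `c(L) < +∞` iff the complexity of `L` is polynomially bounded. -/
theorem stmt7 (A : Type u) [Fintype A] [Nonempty A] (L : Set (List A)) :
    cost L ≠ ⊤ ↔ ∃ α : ℝ, 0 ≤ α ∧ PolyBound (complexity L) α := by
  rw [cost_ne_top_iff]
  constructor
  · rintro ⟨α, hα, hdim⟩
    obtain ⟨k, hk, S, hS, hLS⟩ := polyDim_ne_top_iff.1 hdim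
    obtain ⟨j, rfl⟩ := Nat.exists_eq_add_of_le' hk
    exact ⟨(j + 1) * α + j, by positivity,
      (hS.complexity_powL_succ hα j).of_le (complexity_mono hLS)⟩
  · rintro ⟨α, hα, hL⟩
    exact ⟨α, hα, polyDim_ne_top_iff.2 ⟨1, le_rfl, L, hL, (powL_one L).ge⟩⟩
end
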